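/- The tangle space of G is homeomorphic to the space obtained from the Stone-Čech remainder of its 1-complex by collapsing each connected component to a single point: there is a homeomorphism Θ ≃ₜ ConnectedComponents ↥G*, where ↥G* is the remainder G* with its subspace topology and ConnectedComponents denotes the quotient of a space by its connected components. -/

import Mathlib

open SimpleGraph

variable {V : Type*} (G : SimpleGraph V)

/-- The darts of `G` carry the discrete topology. -/
instance : TopologicalSpace G.Dart := ⊥

instance : DiscreteTopology G.Dart := ⟨rfl⟩

/-- The generating relation for the 1-complex: `(d, t) ∼ (d.symm, 1 − t)`, and
`(d, 0) ∼ (d', 0)` whenever `d` and `d'` have the same initial vertex. -/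
def oneComplexRel (p q : G.Dart × unitInterval) : Prop :=
  (q.1 = p.1.symm ∧ q.2 = unitInterval.symm p.2) ∨
    (p.2 = 0 ∧ q.2 = 0 ∧ p.1.fst = q.1.fst)

/-- The equivalence relation generated by `oneComplexRel`. -/
def oneComplexSetoid : Setoid (G.Dart × unitInterval) :=
  Relation.EqvGen.setoid (oneComplexRel G)

/-- The 1-complex `|G|` of the graph `G`. -/
abbrev OneComplex : Type _ :=
  Quotient (oneComplexSetoid G)

/-- The set of vertex points of the 1-complex. -/
def vertexPoints : Set (OneComplex G) :=
  {x | ∃ d : G.Dart, x = Quotient.mk (oneComplexSetoid G) (d, (0 : unitInterval))}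

/-- The set of inner edge points of the 1-complex. -/
def innerEdgePoints : Set (OneComplex G) :=
  {x | ∃ (d : G.Dart) (t : unitInterval), 0 < (t : ℝ) ∧ (t : ℝ) < 1 ∧
    x = Quotient.mk (oneComplexSetoid G) (d, t)}

/-- The Stone-Čech remainder `G*` of the 1-complex `|G|`. -/
def stoneCechRemainder : Set (StoneCech (OneComplex G)) :=
  (Set.range (stoneCechUnit : OneComplex G → StoneCech (OneComplex G)))ᶜ

/-- The tangle space `Θ` of `G`: the inverse limit of the ultrafilter spaces
`Ultrafilter (G.ComponentCompl X)` over the finite vertex sets `X`. -/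
def TangleSpace : Type _ :=
  {U : ∀ X : Finset V, Ultrafilter (G.ComponentCompl (X : Set V)) //
    ∀ (X Y : Finset V) (h : X ⊆ Y),
      (U Y).map (ComponentCompl.hom (Finset.coe_subset.mpr h)) = U X}

instance : TopologicalSpace (TangleSpace G) :=
  instTopologicalSpaceSubtype


/-! A point `p` of `G*` determines a tangle. For finite `X` the open stars of the vertices outside
`X` cover `|G|` up to a compact set, and those of vertices in different components of `G - X` are
disjoint, so of two complementary sets of components exactly one has an open star that is a
neighbourhood of `p` in `βG`. The resulting map `G* → Θ` is continuous and `Θ` is totally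
disconnected, so it descends to the connected components of `G*`.

Call the points of `βG` which lie in the closure of every `|G - X|` the tail of `G*`; it is compact.
The points of the tail over a tangle `θ` are the limit points of the filter generated by the unions
`⋃ c ∈ C, |G[c]|` with `C ∈ θ X`. They form a nonempty connected set: each `|G[c]|` is connected,
and connectedness passes to limits along an ultrafilter of connected sets and to directed infima of
filters.

It remains to join every `p ∈ G*` to the tail inside `G*`. Represent `p` as the limit of an
ultrafilter of points on darts. Since `p` is not on an edge, the initial and terminal vertices of
these darts cannot both be eventually constant, so the darts may be oriented such that their
terminal vertices leave every finite set. The segments from the points to these terminal vertices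
then accumulate nowhere in `|G|`, and their limit points form a connected subset of `G*` which
contains `p` and meets the tail. -/

open Set Filter Topology

section PreconnectedFilter

variable {X Y ι : Type*} [TopologicalSpace X] [TopologicalSpace Y]

/-- The analogue for filters of preconnectedness of sets: whenever the union of two disjoint open
sets belongs to the filter, so does one of them. Along such a filter the limit points of a map into
a compact Hausdorff space form a connected set. -/
def PreconnectedFilter (H : Filter X) : Prop :=
  ∀ ⦃a b : Set X⦄, IsOpen a → IsOpen b → Disjoint a b → a ∪ b ∈ H → a ∈ H ∨ b ∈ H

namespace PreconnectedFilter

theorem principal {s : Set X} (hs : IsPreconnected s) : PreconnectedFilter (𝓟 s) :=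
  fun a b ha hb hab h ↦
    isPreconnected_iff_subset_of_disjoint.1 hs a b ha hb h (by rw [hab.inter_eq, inter_empty])

theorem bind_ultrafilter {W : Ultrafilter ι} {m : ι → Filter X}
    (hm : ∀ i, PreconnectedFilter (m i)) : PreconnectedFilter ((W : Filter ι).bind m) := by
  intro a b ha hb hab h
  rw [mem_bind'] at h ⊢
  exact Ultrafilter.eventually_or.1 (mem_of_superset h fun i hi ↦ hm i ha hb hab hi)

theorem iInf_of_directed [Nonempty ι] {H : ι → Filter X} (hH : ∀ i, PreconnectedFilter (H i))
    (hd : Directed (· ≥ ·) H) : PreconnectedFilter (⨅ i, H i) := by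
  intro a b ha hb hab h
  obtain ⟨i, hi⟩ := (mem_iInf_of_directed hd _).1 h
  exact (hH i ha hb hab hi).imp (mem_iInf_of_mem i) (mem_iInf_of_mem i)

theorem map {H : Filter X} (hH : PreconnectedFilter H) {f : X → Y} (hf : Continuous f) :
    PreconnectedFilter (H.map f) :=
  fun _ _ ha hb hab h ↦ hH (ha.preimage hf) (hb.preimage hf) (hab.preimage f) h

theorem isPreconnected_setOfPred_clusterPt [CompactSpace Y] [T2Space Y] {H : Filter Y}
    (hH : PreconnectedFilter H) : IsPreconnected {y | ClusterPt y H} := by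
  rw [isPreconnected_iff_subset_of_fully_disjoint_closed isClosed_setOfPred_clusterPt]
  intro u v hu hv huv hd
  obtain ⟨a, b, ha, hb, hua, hvb, hab⟩ := normal_separation hu hv hd
  have hmem : a ∪ b ∈ H :=
    isCompact_univ.le_nhdsSet_of_clusterPt univ_mem (fun y _ hy ↦ huv hy)
      ((ha.union hb).mem_nhdsSet.2 (union_subset_union hua hvb))
  have avoid {w c d : Set Y} (hc : c ∈ H) (hd : IsOpen d) (hwd : w ⊆ d) (hcd : Disjoint c d) :
      ∀ y, ClusterPt y H → y ∉ w := fun y hy hyw ↦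
    let ⟨_, hzd, hzc⟩ := clusterPt_iff_nonempty.1 hy (hd.mem_nhds (hwd hyw)) hc
    hcd.notMem_of_mem_left hzc hzd
  exact (hH ha hb hab hmem).imp
    (fun h y hy ↦ (huv hy).resolve_right (avoid h hb hvb hab y hy))
    (fun h y hy ↦ (huv hy).resolve_left (avoid h ha hua hab.symm y hy))

theorem isPreconnected_setOfPred_mapClusterPt [CompactSpace Y] [T2Space Y] {H : Filter X}
    (hH : PreconnectedFilter H) {f : X → Y} (hf : Continuous f) :
    IsPreconnected {y | MapClusterPt y H f} :=
  (hH.map hf).isPreconnected_setOfPred_clusterPt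

end PreconnectedFilter

end PreconnectedFilter

section General

variable {X Y : Type*} [TopologicalSpace X] [TopologicalSpace Y]

theorem normalSpace_of_isClosedMap [NormalSpace X] {f : X → Y} (hf : Continuous f)
    (hcl : IsClosedMap f) (hsurj : f.Surjective) : NormalSpace Y where
  normal s t hs ht hst := by
    obtain ⟨a, b, ha, hb, hsa, htb, hab⟩ :=
      normal_separation (hs.preimage hf) (ht.preimage hf) (hst.preimage f)
    have isOpen_kernImage {u : Set X} (hu : IsOpen u) : IsOpen (kernImage f u) :=
      isClosedMap_iff_kernImage.1 hcl hu
    refine ⟨kernImage f a, kernImage f b, isOpen_kernImage ha, isOpen_kernImage hb,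
      subset_kernImage_iff.2 hsa, subset_kernImage_iff.2 htb, disjoint_left.2 fun y hya hyb ↦ ?_⟩
    obtain ⟨x, rfl⟩ := hsurj y
    exact disjoint_left.1 hab (hya rfl) (hyb rfl)

theorem isOpen_setOfPred_mem_comap_nhds {α : Type*} (f : α → Y) (s : Set α) :
    IsOpen {y | s ∈ comap f (𝓝 y)} := by
  simp only [mem_comap'']
  exact isOpen_setOfPred_eventually_nhds

theorem connectedComponents_coe_eq_of_isPreconnected {s E : Set X} (hE : IsPreconnected E)
    (hEs : E ⊆ s) {p q : s} (hp : (p : X) ∈ E) (hq : (q : X) ∈ E) :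
    (p : ConnectedComponents s) = q := by
  have h : IsPreconnected ((↑) ⁻¹' E : Set s) :=
    IsInducing.subtypeVal.isPreconnected_image.1 <| by
      rwa [Subtype.image_preimage_coe, inter_eq_right.2 hEs]
  exact ConnectedComponents.coe_eq_coe'.2 (h.subset_connectedComponent hq hp)

theorem nonempty_connectedComponents_homeomorph [T2Space Y] [TotallyDisconnectedSpace Y]
    {f : X → Y} (hf : Continuous f) {K : Set X} (hK : IsCompact K)
    (hmeets : ∀ x : X, ∃ k ∈ K, (x : ConnectedComponents X) = k) (hsurj : f '' K = univ)
    (hinj : ∀ k ∈ K, ∀ l ∈ K, f k = f l → (k : ConnectedComponents X) = l) :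
    Nonempty (ConnectedComponents X ≃ₜ Y) := by
  have hcompact : CompactSpace (ConnectedComponents X) := by
    refine ⟨(hK.image ConnectedComponents.continuous_coe).of_isClosed_subset isClosed_univ ?_⟩
    rintro c -
    obtain ⟨x, rfl⟩ := ConnectedComponents.surjective_coe c
    obtain ⟨k, hk, hxk⟩ := hmeets x
    exact ⟨k, hk, hxk.symm⟩
  have hbij : Function.Bijective hf.connectedComponentsLift := by
    refine ⟨fun c d hcd ↦ ?_, fun y ↦ ?_⟩
    · obtain ⟨x, rfl⟩ := ConnectedComponents.surjective_coe c
      obtain ⟨z, rfl⟩ := ConnectedComponents.surjective_coe d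
      obtain ⟨k, hk, hxk⟩ := hmeets x
      obtain ⟨l, hl, hzl⟩ := hmeets z
      rw [hxk, hzl] at hcd ⊢
      exact hinj k hk l hl (by simpa using hcd)
    · obtain ⟨k, -, rfl⟩ := hsurj.symm ▸ mem_univ y
      exact ⟨k, hf.connectedComponentsLift_apply_coe k⟩
  exact ⟨Continuous.homeoOfEquivCompactToT2 (f := Equiv.ofBijective _ hbij)
    hf.connectedComponentsLift_continuous⟩

end General

section StoneCech

variable {X : Type*} [TopologicalSpace X]

theorem disjoint_closure_image_stoneCechUnit [NormalSpace X] {A B : Set X} (hA : IsClosed A)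
    (hB : IsClosed B) (hAB : Disjoint A B) :
    Disjoint (closure (stoneCechUnit '' A)) (closure (stoneCechUnit '' B)) := by
  obtain ⟨f, hfA, hfB, hf⟩ := exists_continuous_zero_one_of_isClosed hA hB hAB
  let g : X → unitInterval := fun x ↦ ⟨f x, hf x⟩
  have hg : Continuous g := f.continuous.subtype_mk _
  have closure_subset {S : Set X} {c : unitInterval} (hS : ∀ x ∈ S, g x = c) :
      closure (stoneCechUnit '' S) ⊆ stoneCechExtend hg ⁻¹' {c} :=
    closure_minimal (by rintro _ ⟨x, hx, rfl⟩; simp [hS x hx])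
      (isClosed_singleton.preimage (continuous_stoneCechExtend hg))
  exact ((disjoint_singleton.2 zero_ne_one).preimage _).mono
    (closure_subset fun x hx ↦ Subtype.ext (hfA hx))
    (closure_subset fun x hx ↦ Subtype.ext (hfB hx))

theorem compl_mem_comap_stoneCechUnit_nhds {S : Set X} (hS : IsCompact S) {p : StoneCech X}
    (hp : p ∉ range (stoneCechUnit : X → StoneCech X)) : Sᶜ ∈ comap stoneCechUnit (𝓝 p) :=
  ⟨(stoneCechUnit '' S)ᶜ,
    (hS.image continuous_stoneCechUnit).isClosed.isOpen_compl.mem_nhds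
      fun h ↦ hp (image_subset_range _ _ h),
    fun _ hx hxS ↦ hx (mem_image_of_mem _ hxS)⟩

theorem mem_comap_stoneCechUnit_nhds_or [NormalSpace X] {A B : Set X} (hA : IsOpen A)
    (hB : IsOpen B) (hc : IsCompact (A ∪ B)ᶜ) {p : StoneCech X}
    (hp : p ∉ range (stoneCechUnit : X → StoneCech X)) :
    A ∈ comap stoneCechUnit (𝓝 p) ∨ B ∈ comap stoneCechUnit (𝓝 p) := by
  have hAB' : A ∪ B ∈ comap stoneCechUnit (𝓝 p) := by
    rw [← compl_compl (A ∪ B)]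
    exact compl_mem_comap_stoneCechUnit_nhds hc hp
  obtain ⟨t, ht, htAB⟩ := mem_comap.1 hAB'
  obtain ⟨N, ⟨hN, hNcl⟩, hNt⟩ := (closed_nhds_basis p).mem_iff.1 ht
  have hNAB : stoneCechUnit ⁻¹' N ⊆ A ∪ B := (preimage_mono hNt).trans htAB
  have avoid {D : Set X} (h : p ∉ closure (stoneCechUnit '' (stoneCechUnit ⁻¹' N \ D))) :
      D ∈ comap stoneCechUnit (𝓝 p) := by
    refine mem_comap.2 ⟨_, inter_mem hN (isClosed_closure.isOpen_compl.mem_nhds h), ?_⟩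
    rintro x ⟨hxN, hx⟩
    by_contra hxD
    exact hx (subset_closure (mem_image_of_mem _ ⟨hxN, hxD⟩))
  have hdisj : Disjoint (stoneCechUnit ⁻¹' N \ A) (stoneCechUnit ⁻¹' N \ B) :=
    disjoint_left.2 fun x hxA hxB ↦ (hNAB hxA.1).elim hxA.2 hxB.2
  have hclosed {D : Set X} (hD : IsOpen D) : IsClosed (stoneCechUnit ⁻¹' N \ D) :=
    (hNcl.preimage continuous_stoneCechUnit).sdiff hD
  have := disjoint_closure_image_stoneCechUnit (hclosed hA) (hclosed hB) hdisj
  exact (em (p ∈ closure (stoneCechUnit '' (stoneCechUnit ⁻¹' N \ A)))).symm.imp avoid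
    fun h ↦ avoid (disjoint_left.1 this h)

theorem notMem_range_stoneCechUnit_of_mapClusterPt [CompletelyRegularSpace X] {F : Filter X}
    (hF : ∀ x, ¬ ClusterPt x F) {p : StoneCech X} (hp : MapClusterPt p F stoneCechUnit) :
    p ∉ range (stoneCechUnit : X → StoneCech X) := by
  rintro ⟨x, rfl⟩
  exact hF x (isInducing_stoneCechUnit.mapClusterPt_iff.1 hp)

end StoneCech

namespace OneComplex

open unitInterval

variable {G}

/-- The class in `|G|` of a point `(d, t)` on a dart. -/
def mk (q : G.Dart × I) : OneComplex G :=
  Quotient.mk (oneComplexSetoid G) q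

theorem mk_surjective : Function.Surjective (mk : G.Dart × I → OneComplex G) :=
  Quotient.mk_surjective

theorem isQuotientMap_mk : IsQuotientMap (mk : G.Dart × I → OneComplex G) :=
  isQuotientMap_quotient_mk'

theorem continuous_mk : Continuous (mk : G.Dart × I → OneComplex G) :=
  isQuotientMap_mk.continuous

theorem mk_symm (d : G.Dart) (t : I) : mk (d.symm, σ t) = mk (d, t) :=
  Eq.symm <| Quotient.sound <| Relation.EqvGen.rel _ _ <| Or.inl ⟨rfl, rfl⟩

theorem mk_symm_zero (d : G.Dart) : mk (d.symm, 0) = mk (d, 1) := by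
  rw [← symm_one, mk_symm]

theorem mk_zero {d d' : G.Dart} (h : d.fst = d'.fst) : mk (d, 0) = mk (d', 0) :=
  Quotient.sound <| Relation.EqvGen.rel _ _ <| Or.inr ⟨rfl, rfl, h⟩

/-- The point `q` of a dart is its endpoint `v`. -/
def AtVertex (v : V) (q : G.Dart × I) : Prop :=
  q.2 = 0 ∧ q.1.fst = v ∨ q.2 = 1 ∧ q.1.snd = v

theorem AtVertex.symm {v : V} {d : G.Dart} {t : I} (h : AtVertex v (d, t)) :
    AtVertex v (d.symm, σ t) := by
  rcases h with ⟨rfl, hv⟩ | ⟨rfl, hv⟩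
  · exact Or.inr ⟨symm_zero, hv⟩
  · exact Or.inl ⟨symm_one, hv⟩

theorem AtVertex.unique {v w : V} {q : G.Dart × I} (hv : AtVertex v q) (hw : AtVertex w q) :
    v = w := by
  rcases hv with ⟨hq, rfl⟩ | ⟨hq, rfl⟩ <;> rcases hw with ⟨hq', rfl⟩ | ⟨hq', rfl⟩ <;> simp_all

theorem AtVertex.mk_eq {v : V} {q q' : G.Dart × I} (h : AtVertex v q) (h' : AtVertex v q') :
    mk q = mk q' := by
  obtain ⟨d, t⟩ := q
  obtain ⟨d', t'⟩ := q'
  rcases h with ⟨rfl, hv⟩ | ⟨rfl, hv⟩ <;> rcases h' with ⟨rfl, hv'⟩ | ⟨rfl, hv'⟩ <;>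
    first
    | exact mk_zero (hv.trans hv'.symm)
    | exact (mk_zero (hv.trans hv'.symm)).trans (mk_symm_zero _)
    | exact (mk_symm_zero _).symm.trans (mk_zero (hv.trans hv'.symm))
    | exact (mk_symm_zero _).symm.trans ((mk_zero (hv.trans hv'.symm)).trans (mk_symm_zero _))

theorem mk_eq_mk_iff {q q' : G.Dart × I} :
    mk q = mk q' ↔
      q = q' ∨ q = (q'.1.symm, σ q'.2) ∨ ∃ v, AtVertex v q ∧ AtVertex v q' := by
  let s : Setoid (G.Dart × I) :=
    { r q q' := q = q' ∨ q = (q'.1.symm, σ q'.2) ∨ ∃ v, AtVertex v q ∧ AtVertex v q'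
      iseqv :=
        { refl _ := Or.inl rfl
          symm := by
            rintro q q' (rfl | rfl | ⟨v, hq, hq'⟩)
            · exact Or.inl rfl
            · exact Or.inr (Or.inl (by simp))
            · exact Or.inr (Or.inr ⟨v, hq', hq⟩)
          trans := by
            rintro q q' q'' (rfl | rfl | ⟨v, hq, hq'⟩) (rfl | rfl | ⟨w, hw, hw'⟩)
            · exact Or.inl rfl
            · exact Or.inr (Or.inl rfl)
            · exact Or.inr (Or.inr ⟨w, hw, hw'⟩)
            · exact Or.inr (Or.inl rfl)
            · exact Or.inl (by simp)
            · exact Or.inr (Or.inr ⟨w, hw.symm, hw'⟩)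
            · exact Or.inr (Or.inr ⟨v, hq, hq'⟩)
            · exact Or.inr (Or.inr ⟨v, hq, by simpa using hq'.symm⟩)
            · obtain rfl := hq'.unique hw
              exact Or.inr (Or.inr ⟨v, hq, hw'⟩) } }
  have hs : oneComplexSetoid G ≤ s := Setoid.eqvGen_le <| by
    rintro ⟨d, t⟩ ⟨d', t'⟩ (⟨rfl, rfl⟩ | ⟨rfl, rfl, h⟩)
    · exact Or.inr (Or.inl (by simp))
    · exact Or.inr (Or.inr ⟨d'.fst, Or.inl ⟨rfl, h⟩, Or.inl ⟨rfl, rfl⟩⟩)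
  refine ⟨fun h ↦ hs (Quotient.exact h), ?_⟩
  rintro (rfl | rfl | ⟨v, hq, hq'⟩)
  · rfl
  · exact mk_symm _ _
  · exact hq.mk_eq hq'

theorem isClosedMap_mk : IsClosedMap (mk : G.Dart × I → OneComplex G) := by
  intro F hF
  let S : Set V := {v | ∃ q ∈ F, AtVertex v q}
  have saturation : mk ⁻¹' (mk '' F) =
      F ∪ (fun q ↦ (q.1.symm, σ q.2)) ⁻¹' F ∪
        ({q | q.2 = 0 ∧ q.1.fst ∈ S} ∪ {q | q.2 = 1 ∧ q.1.snd ∈ S}) := by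
    ext q
    constructor
    · rintro ⟨q', hq', h⟩
      rcases mk_eq_mk_iff.1 h with rfl | rfl | ⟨v, hv', ⟨h0, rfl⟩ | ⟨h1, rfl⟩⟩
      · exact Or.inl (Or.inl hq')
      · exact Or.inl (Or.inr hq')
      · exact Or.inr (Or.inl ⟨h0, q', hq', hv'⟩)
      · exact Or.inr (Or.inr ⟨h1, q', hq', hv'⟩)
    · rintro ((hq | hq) | ⟨h0, q', hq', hv'⟩ | ⟨h1, q', hq', hv'⟩)
      · exact mem_image_of_mem _ hq
      · exact ⟨_, hq, mk_symm _ _⟩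
      · exact ⟨q', hq', hv'.mk_eq (Or.inl ⟨h0, rfl⟩)⟩
      · exact ⟨q', hq', hv'.mk_eq (Or.inr ⟨h1, rfl⟩)⟩
  rw [← isQuotientMap_mk.isClosed_preimage, saturation]
  have hreflect : Continuous fun q : G.Dart × I ↦ (q.1.symm, σ q.2) :=
    ((continuous_of_discreteTopology (f := Dart.symm)).comp continuous_fst).prodMk
      (continuous_symm.comp continuous_snd)
  have hdart (A : Set G.Dart) : IsClosed {q : G.Dart × I | q.1 ∈ A} :=
    (isClosed_discrete A).preimage continuous_fst
  exact (hF.union (hF.preimage hreflect)).union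
    (((isClosed_singleton.preimage continuous_snd).inter (hdart {d | d.fst ∈ S})).union
      ((isClosed_singleton.preimage continuous_snd).inter (hdart {d | d.snd ∈ S})))

instance : T4Space (OneComplex G) where
  t1 x := by
    obtain ⟨q, rfl⟩ := mk_surjective x
    simpa using isClosedMap_mk {q} isClosed_singleton
  toNormalSpace :=
    letI := TopologicalSpace.metrizableSpaceMetric (G.Dart × I)
    normalSpace_of_isClosedMap continuous_mk isClosedMap_mk mk_surjective

/-- The union of the half-open edges `[v, w)` with `v ∈ M`. -/
def openStar (M : Set V) : Set (OneComplex G) :=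
  mk '' {q | q.1.fst ∈ M ∧ q.2 < 1}

theorem mk_mem_openStar {M : Set V} {d : G.Dart} {t : I} :
    mk (d, t) ∈ openStar M ↔ d.fst ∈ M ∧ t < 1 ∨ d.snd ∈ M ∧ 0 < t := by
  constructor
  · rintro ⟨⟨d', t'⟩, ⟨hM, ht⟩, h⟩
    rcases mk_eq_mk_iff.1 h with h | h | ⟨v, hv, hv'⟩
    · obtain ⟨rfl, rfl⟩ := Prod.ext_iff.1 h
      exact Or.inl ⟨hM, ht⟩
    · obtain ⟨rfl, rfl⟩ := Prod.ext_iff.1 h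
      exact Or.inr ⟨hM, by rwa [symm_lt_comm, symm_one] at ht⟩
    · obtain ⟨-, rfl⟩ := hv.resolve_right fun h ↦ ht.ne h.1
      rcases hv' with ⟨rfl, hv'⟩ | ⟨rfl, hv'⟩
      · exact Or.inl ⟨hv' ▸ hM, zero_lt_one⟩
      · exact Or.inr ⟨hv' ▸ hM, zero_lt_one⟩
  · rintro (h | ⟨hM, ht⟩)
    · exact ⟨_, h, rfl⟩
    · exact ⟨(d.symm, σ t), ⟨hM, by rwa [symm_lt_comm, symm_one]⟩, mk_symm d t⟩

theorem isOpen_openStar (M : Set V) : IsOpen (openStar M : Set (OneComplex G)) := by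
  have hdart (A : Set G.Dart) : IsOpen {q : G.Dart × I | q.1 ∈ A} :=
    (isOpen_discrete A).preimage continuous_fst
  have preimage_mk : mk ⁻¹' openStar M =
      ({q : G.Dart × I | q.1.fst ∈ M} ∩ {q | q.2 < 1}) ∪ ({q | q.1.snd ∈ M} ∩ {q | 0 < q.2}) := by
    ext
    exact mk_mem_openStar
  rw [← isQuotientMap_mk.isOpen_preimage, preimage_mk]
  exact ((hdart {d | d.fst ∈ M}).inter (isOpen_lt continuous_snd continuous_const)).union
    ((hdart {d | d.snd ∈ M}).inter (isOpen_lt continuous_const continuous_snd))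

theorem openStar_mono : Monotone (openStar : Set V → Set (OneComplex G)) :=
  fun _ _ h ↦ image_mono fun _ hq ↦ ⟨h hq.1, hq.2⟩

/-- The subcomplex `|G[M]|` of `|G|`, consisting of the vertex points in `M` and of the edges with
both ends in `M`. -/
def inducedComplex (M : Set V) : Set (OneComplex G) :=
  (openStar Mᶜ)ᶜ

theorem mk_mem_inducedComplex {M : Set V} {d : G.Dart} {t : I} :
    mk (d, t) ∈ inducedComplex M ↔ (d.fst ∈ M ∨ t = 1) ∧ (d.snd ∈ M ∨ t = 0) := by
  simp only [inducedComplex, mem_compl_iff, mk_mem_openStar, unitInterval.lt_one_iff_ne_one,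
    unitInterval.pos_iff_ne_zero]
  tauto

theorem isClosed_inducedComplex (M : Set V) : IsClosed (inducedComplex M : Set (OneComplex G)) :=
  (isOpen_openStar _).isClosed_compl

theorem inducedComplex_mono : Monotone (inducedComplex : Set V → Set (OneComplex G)) :=
  fun _ _ h ↦ compl_subset_compl.2 (openStar_mono (compl_subset_compl.2 h))

theorem disjoint_openStar_inducedComplex {M N : Set V} (h : Disjoint M N) :
    Disjoint (openStar M : Set (OneComplex G)) (inducedComplex N) :=
  disjoint_compl_right.mono_left (openStar_mono h.subset_compl_right)

theorem inducedComplex_nonempty (hG : ∀ v, ¬ G.IsIsolated v) {M : Set V} (hM : M.Nonempty) :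
    (inducedComplex M : Set (OneComplex G)).Nonempty := by
  obtain ⟨v, hv⟩ := hM
  obtain ⟨w, hvw⟩ := G.exists_adj_iff_not_isIsolated.2 (hG v)
  exact ⟨mk (⟨(v, w), hvw⟩, 0), mk_mem_inducedComplex.2 ⟨Or.inl hv, Or.inr rfl⟩⟩

theorem isCompact_inducedComplex {M : Set V} (hM : M.Finite) :
    IsCompact (inducedComplex M : Set (OneComplex G)) := by
  have edges : IsCompact (mk '' ({d : G.Dart | d.fst ∈ M ∧ d.snd ∈ M} ×ˢ univ)) := by
    have : {d : G.Dart | d.fst ∈ M ∧ d.snd ∈ M}.Finite :=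
      (hM.prod hM).preimage (Dart.toProd_injective.injOn)
    exact (this.isCompact.prod isCompact_univ).image continuous_mk
  have vertices : IsCompact (⋃ v ∈ M, mk '' {q : G.Dart × I | AtVertex v q}) :=
    hM.isCompact_biUnion fun v _ ↦ Set.Subsingleton.isCompact <| by
      rintro _ ⟨q, hq, rfl⟩ _ ⟨q', hq', rfl⟩
      exact hq.mk_eq hq'
  refine (edges.union vertices).of_isClosed_subset (isClosed_inducedComplex M) fun x hx ↦ ?_
  obtain ⟨⟨d, t⟩, rfl⟩ := mk_surjective x
  rcases mk_mem_inducedComplex.1 hx with ⟨hfst | rfl, hsnd | h⟩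
  · exact Or.inl (mem_image_of_mem _ ⟨⟨hfst, hsnd⟩, mem_univ _⟩)
  · exact Or.inr (mem_biUnion hfst (mem_image_of_mem _ (Or.inl ⟨h, rfl⟩)))
  · exact Or.inr (mem_biUnion hsnd (mem_image_of_mem _ (Or.inr ⟨rfl, rfl⟩)))
  · exact absurd h one_ne_zero

theorem isPreconnected_image_singleton_prod (d : G.Dart) {s : Set I} (hs : IsPreconnected s) :
    IsPreconnected (mk '' ({d} ×ˢ s)) :=
  (isPreconnected_singleton.prod hs).image _ continuous_mk.continuousOn

theorem isPreconnected_image_star (v : V) (M : Set V) :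
    IsPreconnected (mk '' {q : G.Dart × I | q.1.fst = v ∧ (q.2 = 0 ∨ q.1.snd ∈ M)}) := by
  rcases {q : G.Dart × I | q.1.fst = v ∧ (q.2 = 0 ∨ q.1.snd ∈ M)}.eq_empty_or_nonempty with
    h | ⟨⟨d₀, t₀⟩, hd₀, -⟩
  · exact h ▸ image_empty mk ▸ isPreconnected_empty
  refine isPreconnected_of_forall (mk (d₀, 0)) ?_
  rintro _ ⟨⟨d, t⟩, ⟨hd, ht⟩, rfl⟩
  refine ⟨mk '' ({d} ×ˢ Iic t), image_mono ?_,
    ⟨(d, 0), ⟨rfl, mem_Iic.2 nonneg'⟩, mk_zero (hd.trans hd₀.symm)⟩,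
    ⟨(d, t), ⟨rfl, self_mem_Iic⟩, rfl⟩, isPreconnected_image_singleton_prod d isPreconnected_Iic⟩
  rintro ⟨_, s⟩ ⟨rfl, hs⟩
  exact ⟨hd, ht.imp_left fun h ↦ le_antisymm (h ▸ hs) nonneg'⟩

theorem isPreconnected_inducedComplex {M : Set V} (hM : (G.induce M).Preconnected) :
    IsPreconnected (inducedComplex M : Set (OneComplex G)) := by
  let star (v : M) : Set (OneComplex G) := mk '' {q | q.1.fst = v ∧ (q.2 = 0 ∨ q.1.snd ∈ M)}
  have star_inter (v w : M) (h : (G.induce M).Adj v w) : (star v ∩ star w).Nonempty :=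
    ⟨mk (⟨(v, w), h⟩, 1), ⟨_, ⟨rfl, Or.inr w.2⟩, rfl⟩,
      ⟨_, ⟨rfl, Or.inl rfl⟩, mk_symm_zero _⟩⟩
  have cover : (inducedComplex M : Set (OneComplex G)) = ⋃ v, star v := by
    ext x
    obtain ⟨⟨d, t⟩, rfl⟩ := mk_surjective x
    rw [mk_mem_inducedComplex, mem_iUnion]
    constructor
    · rintro ⟨hfst | rfl, hsnd | ht⟩
      · exact ⟨⟨_, hfst⟩, _, ⟨rfl, Or.inr hsnd⟩, rfl⟩
      · exact ⟨⟨_, hfst⟩, _, ⟨rfl, Or.inl ht⟩, rfl⟩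
      · exact ⟨⟨_, hsnd⟩, (d.symm, 0), ⟨rfl, Or.inl rfl⟩, mk_symm_zero d⟩
      · exact absurd ht one_ne_zero
    · rintro ⟨v, ⟨d', t'⟩, ⟨hd', ht'⟩, h⟩
      exact mk_mem_inducedComplex.1
        (h ▸ mk_mem_inducedComplex.2 ⟨Or.inl (hd' ▸ v.2), ht'.symm⟩)
  rw [cover]
  exact IsPreconnected.iUnion_of_reflTransGen (fun v ↦ isPreconnected_image_star v.1 M) fun v w ↦
    Relation.ReflTransGen.mono star_inter _ _ ((reachable_iff_reflTransGen v w).1 (hM v w))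

end OneComplex

section Components

variable {G}

theorem preconnected_induce_componentCompl {K : Set V} (c : G.ComponentCompl K) :
    (G.induce (c : Set V)).Preconnected := by
  let f : c.toSimpleGraph →g G.induce (c : Set V) :=
    { toFun := fun v ↦ ⟨v.1, v.1.2, v.2⟩, map_rel' := id }
  exact c.connected_toSimpleGraph.preconnected.map f fun ⟨v, hvK, hvc⟩ ↦ ⟨⟨⟨v, hvK⟩, hvc⟩, rfl⟩

/-- The set of vertices of the components in `C`. -/
def componentUnion {K : Set V} (C : Set (G.ComponentCompl K)) : Set V :=
  {v | ∃ h : v ∉ K, G.componentComplMk h ∈ C}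

section

variable {K L : Set V} {C D : Set (G.ComponentCompl K)}

theorem componentUnion_mono (h : C ⊆ D) : componentUnion C ⊆ componentUnion D :=
  fun _ ⟨hvK, hv⟩ ↦ ⟨hvK, h hv⟩

theorem componentUnion_empty : componentUnion (∅ : Set (G.ComponentCompl K)) = ∅ := by
  simp [componentUnion]

theorem componentUnion_union_compl (C : Set (G.ComponentCompl K)) :
    componentUnion C ∪ componentUnion Cᶜ = Kᶜ := by
  ext v
  refine ⟨?_, fun hvK ↦ (em (G.componentComplMk hvK ∈ C)).imp (⟨hvK, ·⟩) (⟨hvK, ·⟩)⟩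
  rintro (⟨hvK, -⟩ | ⟨hvK, -⟩) <;> exact hvK

theorem disjoint_componentUnion (h : Disjoint C D) :
    Disjoint (componentUnion C) (componentUnion D) :=
  disjoint_left.2 fun _ ⟨_, hC⟩ ⟨_, hD⟩ ↦ disjoint_left.1 h hC hD

theorem subset_componentUnion {c : G.ComponentCompl K} (hc : c ∈ C) :
    (c : Set V) ⊆ componentUnion C :=
  fun _ ⟨hvK, hv⟩ ↦ ⟨hvK, hv ▸ hc⟩

theorem componentUnion_preimage_hom_subset (h : K ⊆ L) (C : Set (G.ComponentCompl K)) :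
    componentUnion (ComponentCompl.hom h ⁻¹' C) ⊆ componentUnion C :=
  fun _ ⟨hvL, hv⟩ ↦ ⟨fun hvK ↦ hvL (h hvK), hv⟩

theorem mem_componentUnion_inter_of_adj {v w : V} (hvw : G.Adj v w) (hv : v ∈ componentUnion C)
    (hw : w ∈ componentUnion D) : v ∈ componentUnion (C ∩ D) :=
  let ⟨hvK, hvC⟩ := hv
  let ⟨hwK, hwD⟩ := hw
  ⟨hvK, hvC, (G.componentComplMk_eq_of_adj hvK hwK hvw) ▸ hwD⟩

end

end Components

namespace OneComplex

variable {G} {K : Set V}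

theorem openStar_empty : (openStar ∅ : Set (OneComplex G)) = ∅ := by
  simp [openStar]

theorem openStar_union (M N : Set V) :
    (openStar (M ∪ N) : Set (OneComplex G)) = openStar M ∪ openStar N := by
  simp only [openStar, mem_union, or_and_right, ofPred_or, image_union]

theorem openStar_componentUnion_inter (C D : Set (G.ComponentCompl K)) :
    openStar (componentUnion C) ∩ openStar (componentUnion D) ⊆
      (openStar (componentUnion (C ∩ D)) : Set (OneComplex G)) := by
  rintro x ⟨hC, hD⟩
  obtain ⟨⟨d, t⟩, rfl⟩ := mk_surjective x
  rw [mk_mem_openStar] at hC hD ⊢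
  rcases hC with ⟨hC, ht⟩ | ⟨hC, ht⟩ <;> rcases hD with ⟨hD, -⟩ | ⟨hD, -⟩
  · exact Or.inl ⟨⟨hC.1, hC.2, hD.2⟩, ht⟩
  · exact Or.inl ⟨mem_componentUnion_inter_of_adj d.adj hC hD, ht⟩
  · exact Or.inr ⟨mem_componentUnion_inter_of_adj d.adj.symm hC hD, ht⟩
  · exact Or.inr ⟨⟨hC.1, hC.2, hD.2⟩, ht⟩

theorem openStar_componentUnion_inter_inducedComplex_subset (C : Set (G.ComponentCompl K)) :
    openStar (componentUnion C) ∩ inducedComplex Kᶜ ⊆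
      (⋃ c ∈ C, inducedComplex (c : Set V) : Set (OneComplex G)) := by
  rintro x ⟨hC, hK⟩
  obtain ⟨⟨d, t⟩, rfl⟩ := mk_surjective x
  rw [mk_mem_openStar] at hC
  rw [mk_mem_inducedComplex] at hK
  simp only [mem_iUnion, mk_mem_inducedComplex]
  rcases hC with ⟨⟨hdK, hdC⟩, -⟩ | ⟨⟨hdK, hdC⟩, -⟩
  · have hd := G.componentComplMk_mem hdK
    exact ⟨_, hdC, Or.inl hd,
      hK.2.imp_left fun h ↦ ComponentCompl.mem_of_adj _ _ hd h d.adj⟩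
  · have hd := G.componentComplMk_mem hdK
    exact ⟨_, hdC,
      hK.1.imp_left fun h ↦ ComponentCompl.mem_of_adj _ _ hd h d.adj.symm, Or.inl hd⟩

/-- The filter on `|G|` generated by the subcomplexes `|G - X|` for finite sets `X` of vertices. -/
def tailFilter (G : SimpleGraph V) : Filter (OneComplex G) :=
  ⨅ X : Finset V, 𝓟 (inducedComplex (X : Set V)ᶜ)

theorem inducedComplex_compl_mem_tailFilter (X : Finset V) :
    inducedComplex (X : Set V)ᶜ ∈ tailFilter G :=
  mem_iInf_of_mem X (mem_principal_self _)

theorem exists_mem_openStar_singleton (x : OneComplex G) : ∃ v, x ∈ openStar {v} := by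
  obtain ⟨⟨d, t⟩, rfl⟩ := mk_surjective x
  simp only [mk_mem_openStar, mem_singleton_iff]
  rcases eq_or_ne t 1 with rfl | ht
  · exact ⟨_, Or.inr ⟨rfl, zero_lt_one⟩⟩
  · exact ⟨_, Or.inl ⟨rfl, unitInterval.lt_one_iff_ne_one.2 ht⟩⟩

theorem not_clusterPt_tailFilter (x : OneComplex G) : ¬ ClusterPt x (tailFilter G) := by
  intro h
  obtain ⟨v, hv⟩ := exists_mem_openStar_singleton x
  obtain ⟨y, hy, hy'⟩ := clusterPt_iff_nonempty.1 h ((isOpen_openStar _).mem_nhds hv)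
    (inducedComplex_compl_mem_tailFilter {v})
  refine (disjoint_openStar_inducedComplex ?_).notMem_of_mem_left hy hy'
  simp

/-- The points of `βG` which lie in the closure of `|G - X|` for each finite set `X` of vertices. -/
def tailRemainder (G : SimpleGraph V) : Set (StoneCech (OneComplex G)) :=
  {p | MapClusterPt p (tailFilter G) stoneCechUnit}

theorem tailRemainder_subset_stoneCechRemainder : tailRemainder G ⊆ stoneCechRemainder G :=
  fun _ hp ↦ notMem_range_stoneCechUnit_of_mapClusterPt not_clusterPt_tailFilter hp

theorem isCompact_tailRemainder : IsCompact (tailRemainder G) :=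
  isClosed_setOfPred_clusterPt.isCompact

end OneComplex

namespace OneComplex

variable {G} {K : Set V}

/-- The filter on `|G|` generated by the sets `⋃ c ∈ C, |G[c]|` for `C` in the ultrafilter `U`. -/
def componentFilter (U : Ultrafilter (G.ComponentCompl K)) : Filter (OneComplex G) :=
  (U : Filter (G.ComponentCompl K)).bind fun c ↦ 𝓟 (inducedComplex (c : Set V))

theorem mem_componentFilter {U : Ultrafilter (G.ComponentCompl K)} {s : Set (OneComplex G)} :
    s ∈ componentFilter U ↔ {c : G.ComponentCompl K | inducedComplex (c : Set V) ⊆ s} ∈ U :=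
  Iff.rfl

theorem componentFilter_le_map_hom {L : Set V} (h : K ⊆ L) (U : Ultrafilter (G.ComponentCompl L)) :
    componentFilter U ≤ componentFilter (U.map (ComponentCompl.hom h)) :=
  fun _ hs ↦ mem_componentFilter.2 <|
    mem_of_superset (Ultrafilter.mem_map.1 (mem_componentFilter.1 hs)) fun c hc ↦
      (inducedComplex_mono (ComponentCompl.subset_hom c h)).trans hc

theorem preconnectedFilter_componentFilter (U : Ultrafilter (G.ComponentCompl K)) :
    PreconnectedFilter (componentFilter U) :=
  .bind_ultrafilter fun c ↦
    .principal (isPreconnected_inducedComplex (preconnected_induce_componentCompl c))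

theorem componentFilter_neBot (hG : ∀ v, ¬ G.IsIsolated v) (U : Ultrafilter (G.ComponentCompl K)) :
    (componentFilter U).NeBot :=
  forall_mem_nonempty_iff_neBot.1 fun _ hs ↦
    let ⟨c, hc⟩ := U.nonempty_of_mem (mem_componentFilter.1 hs)
    (inducedComplex_nonempty hG c.nonempty).mono hc

theorem componentFilter_le_principal (U : Ultrafilter (G.ComponentCompl K)) :
    componentFilter U ≤ 𝓟 (inducedComplex Kᶜ) :=
  le_principal_iff.2 <| mem_componentFilter.2 <| univ_mem' fun _ ↦
    inducedComplex_mono fun _ hv ↦ ComponentCompl.notMem_of_mem hv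

end OneComplex

namespace TangleSpace

open OneComplex

variable {G}

theorem openStar_componentUnion_compl_notMem_iff (p : stoneCechRemainder G) (X : Finset V)
    (C : Set (G.ComponentCompl (X : Set V))) :
    openStar (componentUnion Cᶜ) ∉ comap stoneCechUnit (𝓝 p.1) ↔
      openStar (componentUnion C) ∈ comap stoneCechUnit (𝓝 p.1) := by
  have hcompact : IsCompact
      (openStar (componentUnion C) ∪ openStar (componentUnion Cᶜ) : Set (OneComplex G))ᶜ := by
    rw [← openStar_union, componentUnion_union_compl]
    exact isCompact_inducedComplex X.finite_toSet
  refine ⟨(mem_comap_stoneCechUnit_nhds_or (isOpen_openStar _) (isOpen_openStar _) hcompact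
    p.2).resolve_right, fun hC hC' ↦ ?_⟩
  have h := mem_of_superset (inter_mem hC hC') (openStar_componentUnion_inter C Cᶜ)
  rw [inter_compl_self, componentUnion_empty, openStar_empty] at h
  have := isDenseInducing_stoneCechUnit.comap_nhds_neBot p.1
  exact empty_notMem _ h

/-- The ultrafilter on the components of `G - X` given by the position of a point `p` of the
remainder: it consists of the sets of components whose open star is a neighbourhood of `p`. -/
def remainderUltrafilter (p : stoneCechRemainder G) (X : Finset V) :
    Ultrafilter (G.ComponentCompl (X : Set V)) :=
  Ultrafilter.ofComplNotMemIff
    { sets := {C | openStar (componentUnion C) ∈ comap stoneCechUnit (𝓝 p.1)}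
      univ_sets := (openStar_componentUnion_compl_notMem_iff p X univ).1 <| by
        rw [compl_univ, componentUnion_empty, openStar_empty]
        have := isDenseInducing_stoneCechUnit.comap_nhds_neBot p.1
        exact empty_notMem _
      sets_of_superset hC h := by
        rw [mem_ofPred_eq] at *
        exact mem_of_superset hC (openStar_mono (componentUnion_mono h))
      inter_sets hC hD := by
        rw [mem_ofPred_eq] at *
        exact mem_of_superset (inter_mem hC hD) (openStar_componentUnion_inter _ _) }
    (openStar_componentUnion_compl_notMem_iff p X)

theorem mem_remainderUltrafilter {p : stoneCechRemainder G} {X : Finset V}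
    {C : Set (G.ComponentCompl (X : Set V))} :
    C ∈ remainderUltrafilter p X ↔
      openStar (componentUnion C) ∈ comap (stoneCechUnit : OneComplex G → _) (𝓝 p.1) :=
  Iff.rfl

/-- The tangle induced by a point of the remainder. -/
def ofRemainder (p : stoneCechRemainder G) : TangleSpace G :=
  ⟨remainderUltrafilter p, fun _ _ _ ↦ Eq.symm <| Ultrafilter.eq_of_le fun C hC ↦
    mem_remainderUltrafilter.2 <| mem_of_superset (mem_remainderUltrafilter.1 hC)
      (openStar_mono (componentUnion_preimage_hom_subset _ C))⟩

theorem continuous_ofRemainder :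
    Continuous (ofRemainder : stoneCechRemainder G → TangleSpace G) := by
  refine Continuous.subtype_mk (continuous_pi fun X ↦ ?_) _
  rw [ultrafilterBasis_is_basis.continuous_iff]
  rintro _ ⟨C, rfl⟩
  exact (isOpen_setOfPred_mem_comap_nhds (stoneCechUnit : OneComplex G → _)
    (openStar (componentUnion C))).preimage continuous_subtype_val

variable (θ : TangleSpace G)

/-- The filter on `|G|` generated by the sets `⋃ c ∈ C, |G[c]|` for finite `X` and sets `C` of
components of `G - X` which belong to the tangle `θ`. -/
def filter : Filter (OneComplex G) :=
  ⨅ X, componentFilter (θ.1 X)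

theorem directed_componentFilter : Directed (· ≥ ·) fun X ↦ componentFilter (θ.1 X) :=
  Antitone.directed_ge fun X Y (h : X ⊆ Y) ↦ by
    rw [← θ.2 X Y h]
    exact componentFilter_le_map_hom _ _

theorem preconnectedFilter_filter : PreconnectedFilter θ.filter :=
  .iInf_of_directed (fun _ ↦ preconnectedFilter_componentFilter _) θ.directed_componentFilter

theorem filter_neBot (hG : ∀ v, ¬ G.IsIsolated v) : θ.filter.NeBot :=
  iInf_neBot_of_directed' θ.directed_componentFilter fun _ ↦ componentFilter_neBot hG _

theorem filter_le_tailFilter : θ.filter ≤ tailFilter G :=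
  iInf_mono fun X ↦ componentFilter_le_principal (θ.1 X)

/-- The limit points of a tangle in the remainder. -/
def core : Set (StoneCech (OneComplex G)) :=
  {p | MapClusterPt p θ.filter stoneCechUnit}

theorem isPreconnected_core : IsPreconnected θ.core :=
  θ.preconnectedFilter_filter.isPreconnected_setOfPred_mapClusterPt continuous_stoneCechUnit

theorem core_subset_tailRemainder : θ.core ⊆ tailRemainder G :=
  fun _ hp ↦ hp.mono θ.filter_le_tailFilter

theorem core_subset_stoneCechRemainder : θ.core ⊆ stoneCechRemainder G :=
  θ.core_subset_tailRemainder.trans tailRemainder_subset_stoneCechRemainder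

theorem core_nonempty (hG : ∀ v, ¬ G.IsIsolated v) : θ.core.Nonempty :=
  have := θ.filter_neBot hG
  exists_clusterPt_of_compactSpace _

variable {θ}

theorem ofRemainder_eq {p : stoneCechRemainder G} (hp : p.1 ∈ θ.core) : ofRemainder p = θ := by
  refine Subtype.ext (funext fun X ↦ Eq.symm <| Ultrafilter.eq_of_le fun C hC ↦ ?_)
  by_contra hCθ
  let D : Set (OneComplex G) := ⋃ c ∈ Cᶜ, inducedComplex (c : Set V)
  have hθ : D ∈ θ.filter :=
    mem_iInf_of_mem X <| mem_componentFilter.2 <|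
      mem_of_superset (Ultrafilter.compl_mem_iff_notMem.2 hCθ) fun c hc ↦
        subset_iUnion₂_of_subset c hc Subset.rfl
  have hCD : Disjoint (openStar (componentUnion C)) D :=
    disjoint_iUnion₂_right.2 fun c hc ↦ disjoint_openStar_inducedComplex <|
      (disjoint_componentUnion disjoint_compl_right).mono_right (subset_componentUnion hc)
  obtain ⟨x, hxC, hxD⟩ :=
    inf_neBot_iff.1 (neBot_inf_comap_iff_map'.2 hp) (mem_remainderUltrafilter.1 hC) hθ
  exact hCD.notMem_of_mem_left hxC hxD

theorem mem_core_ofRemainder {p : stoneCechRemainder G} (hp : p.1 ∈ tailRemainder G) :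
    p.1 ∈ (ofRemainder p).core := by
  have hle : comap stoneCechUnit (𝓝 p.1) ⊓ tailFilter G ≤ (ofRemainder p).filter := by
    refine le_iInf fun X s hs ↦ ?_
    refine mem_of_superset (inter_mem_inf (mem_remainderUltrafilter.1 <| mem_componentFilter.1 hs)
      (inducedComplex_compl_mem_tailFilter X)) ?_
    exact (openStar_componentUnion_inter_inducedComplex_subset _).trans (iUnion₂_subset fun _ ↦ id)
  exact neBot_inf_comap_iff_map'.1 <| (neBot_inf_comap_iff_map'.2 hp).mono (le_inf inf_le_left hle)

end TangleSpace

namespace OneComplex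

open unitInterval

variable {G}

/-- The segment of `|G|` from the point `q` of a dart to the terminal vertex of that dart. -/
def terminalSegment (q : G.Dart × I) : Set (OneComplex G) :=
  mk '' ({q.1} ×ˢ Ici q.2)

/-- The filter on `|G|` generated by the sets `⋃ q ∈ A, terminalSegment q` for `A ∈ F`. -/
def sweepFilter (F : Filter (G.Dart × I)) : Filter (OneComplex G) :=
  F.bind fun q ↦ 𝓟 (terminalSegment q)

variable {F : Filter (G.Dart × I)}

theorem mem_sweepFilter {s : Set (OneComplex G)} :
    s ∈ sweepFilter F ↔ ∀ᶠ q in F, terminalSegment q ⊆ s :=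
  Iff.rfl

theorem tendsto_mk_sweepFilter : Tendsto mk F (sweepFilter F) := fun _ hs ↦
  (mem_sweepFilter.1 hs).mono fun _ hq ↦ hq (mem_image_of_mem mk ⟨rfl, self_mem_Ici⟩)

theorem tendsto_mk_one_sweepFilter :
    Tendsto (fun q : G.Dart × I ↦ mk (q.1, 1)) F (sweepFilter F) := fun _ hs ↦
  (mem_sweepFilter.1 hs).mono fun _ hq ↦ hq (mem_image_of_mem mk ⟨rfl, mem_Ici.2 le_one'⟩)

theorem preconnectedFilter_sweepFilter (W : Ultrafilter (G.Dart × I)) :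
    PreconnectedFilter (sweepFilter (W : Filter (G.Dart × I))) :=
  .bind_ultrafilter fun q ↦ .principal (isPreconnected_image_singleton_prod q.1 isPreconnected_Ici)

theorem isClosed_biUnion_terminalSegment {D : Set (G.Dart × I)} (hD : IsClosed D) :
    IsClosed (⋃ q ∈ D, terminalSegment q) := by
  let E : Set ((G.Dart × I) × I) := {r | r.2 ≤ r.1.2 ∧ (r.1.1, r.2) ∈ D}
  have hE : IsClosed E :=
    (isClosed_le continuous_snd continuous_fst.snd).inter
      (hD.preimage (continuous_fst.fst.prodMk continuous_snd))
  convert isClosedMap_mk _ (isClosedMap_fst_of_compactSpace _ hE)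
  simp only [terminalSegment, ← image_iUnion₂]
  congr 1
  ext ⟨d, s⟩
  simp [E, and_comm]

theorem not_clusterPt_sweepFilter_of_isClosed {D : Set (G.Dart × I)} (hD : IsClosed D)
    (hDF : D ∈ F) {x : OneComplex G} (hx : x ∉ ⋃ q ∈ D, terminalSegment q) :
    ¬ ClusterPt x (sweepFilter F) := by
  have hmem : ⋃ q ∈ D, terminalSegment q ∈ sweepFilter F :=
    mem_sweepFilter.2 <| mem_of_superset hDF fun _ hq ↦ subset_biUnion_of_mem hq
  exact fun h ↦ hx <| (isClosed_biUnion_terminalSegment hD).closure_eq ▸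
    mem_closure_iff_clusterPt.2 (h.mono (le_principal_iff.2 hmem))

theorem not_clusterPt_sweepFilter_of_ne {v : V} (hfst : ∀ᶠ q in F, q.1.fst ≠ v)
    (hsnd : ∀ᶠ q in F, q.1.snd ≠ v) {x : OneComplex G} (hx : x ∈ openStar {v}) :
    ¬ ClusterPt x (sweepFilter F) := by
  have hmem : inducedComplex {v}ᶜ ∈ sweepFilter F := by
    refine mem_sweepFilter.2 ?_
    filter_upwards [hfst, hsnd]
    rintro ⟨d, t⟩ hd hd' _ ⟨⟨_, s⟩, ⟨rfl, -⟩, rfl⟩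
    exact mk_mem_inducedComplex.2 ⟨Or.inl hd, Or.inl hd'⟩
  intro h
  obtain ⟨y, hy, hy'⟩ := clusterPt_iff_nonempty.1 h ((isOpen_openStar _).mem_nhds hx) hmem
  exact (disjoint_openStar_inducedComplex disjoint_compl_right).notMem_of_mem_left hy hy'

theorem not_clusterPt_sweepFilter_of_fst_eq {v : V} (hfst : ∀ᶠ q in F, q.1.fst = v)
    {x : OneComplex G} (hx : ∀ w, x ∈ openStar {w} → w = v) (hxF : ¬ ClusterPt x (F.map mk)) :
    ¬ ClusterPt x (sweepFilter F) := by
  obtain ⟨U, ⟨hxU, hU⟩, hUF⟩ :=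
    (nhds_basis_opens x).disjoint_iff_left.1 (not_not.1 (mt clusterPt_iff_not_disjoint.2 hxF))
  refine not_clusterPt_sweepFilter_of_isClosed
    (((isClosed_discrete {d : G.Dart | d.fst = v}).preimage continuous_fst).inter
      (hU.isClosed_compl.preimage continuous_mk)) (inter_mem hfst hUF) ?_
  simp only [mem_iUnion₂, not_exists]
  rintro ⟨d', t⟩ ⟨hd, ht⟩ ⟨⟨d, s⟩, ⟨rfl, hts⟩, rfl⟩
  rcases eq_or_ne s 0 with rfl | hs
  · obtain rfl : t = 0 := le_antisymm hts nonneg'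
    exact ht hxU
  · have hsnd : d.snd = v := hx _ (mk_mem_openStar.2 (Or.inr ⟨rfl, pos_iff_ne_zero.2 hs⟩))
    exact d.fst_ne_snd (hd.trans hsnd.symm)

theorem not_clusterPt_sweepFilter {W : Ultrafilter (G.Dart × I)}
    (hW : ∀ v, ∀ᶠ q : G.Dart × I in W, q.1.snd ≠ v) {x : OneComplex G}
    (hx : ¬ ClusterPt x (map mk (W : Filter (G.Dart × I)))) :
    ¬ ClusterPt x (sweepFilter (W : Filter (G.Dart × I))) := by
  by_cases h : ∃ v, x ∈ openStar {v} ∧ ∀ᶠ q : G.Dart × I in W, q.1.fst ≠ v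
  · obtain ⟨v, hv, hfst⟩ := h
    exact not_clusterPt_sweepFilter_of_ne hfst (hW v) hv
  · have hfst {v : V} (hv : x ∈ openStar {v}) : ∀ᶠ q : G.Dart × I in W, q.1.fst = v := by
      by_contra hne
      exact h ⟨v, hv, Ultrafilter.eventually_not.2 hne⟩
    obtain ⟨v, hv⟩ := exists_mem_openStar_singleton x
    refine not_clusterPt_sweepFilter_of_fst_eq (hfst hv) (fun w hw ↦ ?_) hx
    obtain ⟨q, hqw, hqv⟩ := ((hfst hw).and (hfst hv)).exists
    exact hqw.symm.trans hqv

theorem eventually_fst_ne_or_snd_ne {p : StoneCech (OneComplex G)}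
    (hp : p ∈ stoneCechRemainder G) (hF : Tendsto (stoneCechUnit ∘ mk) F (𝓝 p)) (v w : V) :
    ∀ᶠ q in F, q.1.fst ≠ v ∨ q.1.snd ≠ w := by
  have hcompact : IsCompact (inducedComplex {v, w} : Set (OneComplex G)) :=
    isCompact_inducedComplex (toFinite _)
  filter_upwards [tendsto_comap_iff.2 hF (compl_mem_comap_stoneCechUnit_nhds hcompact hp)] with q hq
  by_contra! h
  exact hq (mk_mem_inducedComplex.2 ⟨Or.inl (by simp [h.1]), Or.inl (by simp [h.2])⟩)

theorem exists_ultrafilter_tendsto_snd_ne {p : StoneCech (OneComplex G)}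
    (hp : p ∈ stoneCechRemainder G) :
    ∃ W : Ultrafilter (G.Dart × I), Tendsto (stoneCechUnit ∘ mk) W (𝓝 p) ∧
      ∀ v, ∀ᶠ q : G.Dart × I in W, q.1.snd ≠ v := by
  have : (comap mk (comap stoneCechUnit (𝓝 p))).NeBot :=
    (isDenseInducing_stoneCechUnit.comap_nhds_neBot p).comap_of_surj mk_surjective
  let W := Ultrafilter.of (comap mk (comap stoneCechUnit (𝓝 p)))
  have hWp : Tendsto (stoneCechUnit ∘ mk) W (𝓝 p) :=
    tendsto_comap_iff.1 (tendsto_comap.mono_left (Ultrafilter.of_le _))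
  by_cases hsnd : ∀ v, ∀ᶠ q : G.Dart × I in W, q.1.snd ≠ v
  · exact ⟨W, hWp, hsnd⟩
  simp only [not_forall, ← Ultrafilter.eventually_not, not_not] at hsnd
  obtain ⟨v, hv⟩ := hsnd
  refine ⟨W.map fun q ↦ (q.1.symm, σ q.2), ?_, fun w ↦ Ultrafilter.mem_map.2 ?_⟩
  · refine tendsto_map'_iff.2 (hWp.congr fun q ↦ ?_)
    simp only [Function.comp_apply, mk_symm]
  · filter_upwards [eventually_fst_ne_or_snd_ne hp hWp w v, hv] with q hq hqv
    exact hq.resolve_right (not_not.2 hqv)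

theorem tendsto_mk_one_tailFilter (hF : ∀ v, ∀ᶠ q : G.Dart × I in F, q.1.snd ≠ v) :
    Tendsto (fun q : G.Dart × I ↦ mk (q.1, 1)) F (tailFilter G) := by
  refine tendsto_iInf.2 fun X ↦ tendsto_principal.2 ?_
  filter_upwards [(eventually_all_finset X).2 fun v _ ↦ hF v] with q hq
  exact mk_mem_inducedComplex.2 ⟨Or.inr rfl, Or.inl fun h ↦ hq _ h rfl⟩

theorem exists_mem_tailRemainder_connectedComponents_eq (p : stoneCechRemainder G) :
    ∃ q : stoneCechRemainder G,
      q.1 ∈ tailRemainder G ∧ (p : ConnectedComponents (stoneCechRemainder G)) = q := by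
  obtain ⟨W, hWp, hW⟩ := exists_ultrafilter_tendsto_snd_ne p.2
  let q := (W.map (stoneCechUnit ∘ fun q : G.Dart × I ↦ mk (q.1, 1))).lim
  have hWq : Tendsto (stoneCechUnit ∘ fun q : G.Dart × I ↦ mk (q.1, 1)) W (𝓝 q) :=
    Ultrafilter.le_nhds_lim _
  have hq : q ∈ tailRemainder G := hWq.mapClusterPt.of_comp (tendsto_mk_one_tailFilter hW)
  have not_clusterPt (x : OneComplex G) : ¬ ClusterPt x (map mk (W : Filter (G.Dart × I))) := by
    intro hx
    have hWx : Tendsto (stoneCechUnit ∘ mk) W (𝓝 (stoneCechUnit x)) :=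
      (continuous_stoneCechUnit.tendsto x).comp (Ultrafilter.clusterPt_iff (f := W.map mk).1 hx)
    exact p.2 ⟨x, tendsto_nhds_unique hWx hWp⟩
  refine ⟨⟨q, tailRemainder_subset_stoneCechRemainder hq⟩, hq,
    connectedComponents_coe_eq_of_isPreconnected
      ((preconnectedFilter_sweepFilter W).isPreconnected_setOfPred_mapClusterPt
        continuous_stoneCechUnit)
      (fun _ ↦ notMem_range_stoneCechUnit_of_mapClusterPt
        fun x ↦ not_clusterPt_sweepFilter hW (not_clusterPt x))
      (hWp.mapClusterPt.of_comp tendsto_mk_sweepFilter)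
      (hWq.mapClusterPt.of_comp tendsto_mk_one_sweepFilter)⟩

end OneComplex

namespace TangleSpace

variable {G}

instance : T2Space (TangleSpace G) :=
  inferInstanceAs (T2Space {_U : ∀ X : Finset V, Ultrafilter (G.ComponentCompl (X : Set V)) // _})

instance : TotallyDisconnectedSpace (TangleSpace G) :=
  inferInstanceAs (TotallyDisconnectedSpace
    {_U : ∀ X : Finset V, Ultrafilter (G.ComponentCompl (X : Set V)) // _})

end TangleSpace

open OneComplex TangleSpace in
theorem tangleSpace_homeo_connectedComponents_remainder_general (hG : ∀ v, ¬ G.IsIsolated v) :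
    Nonempty (TangleSpace G ≃ₜ ConnectedComponents (stoneCechRemainder G)) := by
  have hcompact : IsCompact ((↑) ⁻¹' tailRemainder G : Set (stoneCechRemainder G)) := by
    rw [IsInducing.subtypeVal.isCompact_iff, Subtype.image_preimage_coe,
      inter_eq_right.2 tailRemainder_subset_stoneCechRemainder]
    exact isCompact_tailRemainder
  have hsurj : ofRemainder '' ((↑) ⁻¹' tailRemainder G) = (univ : Set (TangleSpace G)) := by
    refine eq_univ_of_forall fun θ ↦ ?_
    obtain ⟨p, hp⟩ := θ.core_nonempty hG
    exact ⟨⟨p, θ.core_subset_stoneCechRemainder hp⟩, θ.core_subset_tailRemainder hp,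
      ofRemainder_eq hp⟩
  exact (nonempty_connectedComponents_homeomorph continuous_ofRemainder hcompact
    exists_mem_tailRemainder_connectedComponents_eq hsurj fun p hp q hq h ↦
      connectedComponents_coe_eq_of_isPreconnected (isPreconnected_core _)
        (core_subset_stoneCechRemainder _) (mem_core_ofRemainder hp)
        (h ▸ mem_core_ofRemainder hq)).map Homeomorph.symm

/-- Theorem 1 / Theorem 5.23: the tangle space of `G` is homeomorphic to the quotient of the
Stone-Čech remainder of the 1-complex `|G|` obtained by collapsing each connected component
to a single point. -/
theorem tangleSpace_homeo_connectedComponents_remainder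
    [Infinite V] (hG : G.Connected) :
    Nonempty (TangleSpace G ≃ₜ ConnectedComponents (stoneCechRemainder G)) :=
  tangleSpace_homeo_connectedComponents_remainder_general G fun v ↦ hG.preconnected.not_isIsolated v
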